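/- Conditional distribution of a dithered quantizer output: let X be a random vector in ℝ^k with density f_X, let P₀ ⊂ ℝ^k be a bounded measurable set of positive volume V, let N be uniformly distributed over −P₀ and independent of X, and set X̂ = X + N. Then for any disjoint index sets I, J ⊆ {1,…,k}: (i) the marginal density of X̂_J is f_{X̂_J}(x̂_J) = (1/V) ∫_{P₀} f_{X_J}(x̂_J + τ_J) dτ, and (ii) whenever ∫_{P₀} f_{X_J}(x̂_J + τ_J) dτ ≠ 0, the conditional cumulative distribution function satisfies F_{X̂_I|X̂_J}(x̂_I | x̂_J) = [ ∫_{P₀} F_{X_I|X_J}(x̂_I + τ_I | x̂_J + τ_J) f_{X_J}(x̂_J + τ_J) dτ ] / [ ∫_{P₀} f_{X_J}(x̂_J + τ_J) dτ ]. -/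

import Mathlib

open MeasureTheory ProbabilityTheory Real
open scoped ENNReal NNReal Classical

/-- Combine values on coordinates in `J` (taken from `x`) with values outside `J`
(taken from `y`) into a full vector in `ℝ^k`. -/
def glue {k : ℕ} (J : Finset (Fin k)) (x : Fin k → ℝ) (y : {i : Fin k // i ∉ J} → ℝ) :
    Fin k → ℝ :=
  fun i => if h : i ∈ J then x i else y ⟨i, h⟩

/-- Marginal density of the subvector indexed by `J`, obtained from a joint density `f` on
`ℝ^k` by integrating out the coordinates outside `J`.  It is written as a function of a full
vector in `ℝ^k`, but depends only on the coordinates in `J`. -/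
noncomputable def margDen {k : ℕ} (f : (Fin k → ℝ) → ℝ) (J : Finset (Fin k))
    (x : Fin k → ℝ) : ℝ :=
  ∫ y : {i : Fin k // i ∉ J} → ℝ, f (glue J x y)

/-- Numerator of the conditional c.d.f. of the subvector indexed by `I` given the subvector
indexed by `J`, for a joint density `f` on `ℝ^k`: the coordinates in `I` are integrated up to
the corresponding values of `x`, the coordinates in `J` are fixed at the values of `x`, and all
remaining coordinates are integrated out. -/
noncomputable def condCDFNum {k : ℕ} (f : (Fin k → ℝ) → ℝ) (I J : Finset (Fin k))
    (x : Fin k → ℝ) : ℝ :=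
  ∫ y : {i : Fin k // i ∉ J} → ℝ,
    if ∀ i : {i : Fin k // i ∉ J}, i.1 ∈ I → y i ≤ x i.1 then f (glue J x y) else 0

/-- Conditional c.d.f. `F_{X_I | X_J}` derived from a joint density `f` on `ℝ^k`, written as a
function of a full vector (argument coordinates in `I` are the evaluation point of the c.d.f.,
coordinates in `J` are the conditioning values). -/
noncomputable def condCDFd {k : ℕ} (f : (Fin k → ℝ) → ℝ) (I J : Finset (Fin k))
    (x : Fin k → ℝ) : ℝ :=
  condCDFNum f I J x / margDen f J x


lemma glue_add {k : ℕ} (J : Finset (Fin k)) (x τ : Fin k → ℝ) (y : {i : Fin k // i ∉ J} → ℝ) :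
    glue J x y + τ = glue J (x + τ) (y + fun i => τ i.1) := by
  funext i
  by_cases h : i ∈ J <;> simp [glue, h]

/-- extension by zero -/
noncomputable def ext0 {k : ℕ} (J : Finset (Fin k)) (u : {i : Fin k // i ∈ J} → ℝ) : Fin k → ℝ :=
  fun i => if h : i ∈ J then u ⟨i, h⟩ else 0

lemma measurable_ext0 {k : ℕ} (J : Finset (Fin k)) : Measurable (ext0 J) := by
  refine measurable_pi_lambda _ fun i => ?_
  by_cases h : i ∈ J
  · simpa [ext0, h] using measurable_pi_apply _
  · simp [ext0, h]

lemma measurable_glue {k : ℕ} (J : Finset (Fin k)) :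
    Measurable (fun p : (Fin k → ℝ) × ({i : Fin k // i ∉ J} → ℝ) => glue J p.1 p.2) := by
  refine measurable_pi_lambda _ fun i => ?_
  by_cases h : i ∈ J
  · simp only [glue, h, dite_true]; fun_prop
  · simp only [glue, h, dite_false]; fun_prop

lemma lintegral_split {k : ℕ} (J : Finset (Fin k)) (F : (Fin k → ℝ) → ℝ≥0∞) (hF : Measurable F) :
    ∫⁻ x, F x = ∫⁻ u : {i : Fin k // i ∈ J} → ℝ, ∫⁻ y : {i : Fin k // i ∉ J} → ℝ,
      F (glue J (ext0 J u) y) := by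
  have h := (volume_preserving_piEquivPiSubtypeProd (fun _ : Fin k => ℝ) (fun i => i ∈ J)).symm
  rw [← h.lintegral_comp hF]
  have h2 : Measurable fun p : ({i : Fin k // i ∈ J} → ℝ) × ({i : Fin k // i ∉ J} → ℝ) =>
      F (glue J (ext0 J p.1) p.2) :=
    hF.comp ((measurable_glue J).comp (((measurable_ext0 J).comp measurable_fst).prodMk measurable_snd))
  rw [← lintegral_prod (fun p : ({i : Fin k // i ∈ J} → ℝ) × ({i : Fin k // i ∉ J} → ℝ) =>
      F (glue J (ext0 J p.1) p.2)) h2.aemeasurable]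
  refine Eq.trans (lintegral_congr (g := fun p : ({i : Fin k // i ∈ J} → ℝ) ×
    ({i : Fin k // i ∉ J} → ℝ) => F (glue J (ext0 J p.1) p.2)) fun p => ?_) ?_
  swap
  · rw [Measure.volume_eq_prod]
    congr!
  congr 1
  funext i
  by_cases h : i ∈ J <;>
    simp [glue, ext0, h, MeasurableEquiv.piEquivPiSubtypeProd, Equiv.piEquivPiSubtypeProd]

lemma glue_congr {k : ℕ} (J : Finset (Fin k)) (x x' : Fin k → ℝ) (y : {i : Fin k // i ∉ J} → ℝ)
    (h : ∀ i ∈ J, x i = x' i) : glue J x y = glue J x' y := by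
  funext i
  by_cases hi : i ∈ J <;> simp [glue, hi, h]

lemma key_integrable {k : ℕ} (f : (Fin k → ℝ) → ℝ) (hfm : Measurable f) (hf0 : ∀ x, 0 ≤ f x)
    (hf : ∫⁻ x, ENNReal.ofReal (f x) ≠ ∞)
    (P₀ : Set (Fin k → ℝ)) (hP₀b : Bornology.IsBounded P₀) (J : Finset (Fin k))
    (x : Fin k → ℝ) :
    Integrable (fun p : (Fin k → ℝ) × ({i : Fin k // i ∉ J} → ℝ) => f (glue J (x + p.1) p.2))
      ((volume.restrict P₀).prod volume) := by
  have hm1 : Measurable (fun p : (Fin k → ℝ) × ({i : Fin k // i ∉ J} → ℝ) =>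
      f (glue J (x + p.1) p.2)) :=
    hfm.comp ((measurable_glue J).comp ((measurable_fst.const_add x).prodMk measurable_snd))
  refine ⟨hm1.aestronglyMeasurable, ?_⟩
  rw [hasFiniteIntegral_iff_ofReal (ae_of_all _ fun _ => hf0 _)]
  rw [lintegral_prod _ hm1.ennreal_ofReal.aemeasurable]
  set h : (Fin k → ℝ) → ℝ≥0∞ := fun τ => ∫⁻ y : {i : Fin k // i ∉ J} → ℝ,
    ENNReal.ofReal (f (glue J (x + τ) y)) with hh
  have hhm : Measurable h := hm1.ennreal_ofReal.lintegral_prod_right'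
  obtain ⟨R, hR⟩ := hP₀b.subset_closedBall 0
  set B : Set ({i : Fin k // i ∉ J} → ℝ) := Metric.closedBall 0 (max R 0) with hB
  set C : Set (Fin k → ℝ) := {τ | (fun i : {i : Fin k // i ∉ J} => τ i.1) ∈ B} with hC
  have hCm : MeasurableSet C :=
    measurableSet_preimage (measurable_pi_lambda _ fun i => measurable_pi_apply _)
      Metric.isClosed_closedBall.measurableSet
  have hPC : P₀ ⊆ C := by
    intro τ hτ
    have h1 := hR hτ
    simp only [mem_closedBall_zero_iff] at h1
    simp only [hC, hB, Set.mem_ofPred_eq, mem_closedBall_zero_iff]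
    rw [pi_norm_le_iff_of_nonneg (le_max_right _ _)]
    intro i
    exact ((norm_le_pi_norm τ i.1).trans h1).trans (le_max_left _ _)
  calc ∫⁻ τ in P₀, h τ ≤ ∫⁻ τ in C, h τ := lintegral_mono_set hPC
    _ = ∫⁻ τ, C.indicator h τ := (lintegral_indicator hCm _).symm
    _ = ∫⁻ u : {i : Fin k // i ∈ J} → ℝ, ∫⁻ y : {i : Fin k // i ∉ J} → ℝ,
          C.indicator h (glue J (ext0 J u) y) := lintegral_split J _ (hhm.indicator hCm)
    _ = ∫⁻ u : {i : Fin k // i ∈ J} → ℝ, ∫⁻ y : {i : Fin k // i ∉ J} → ℝ,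
          B.indicator (fun _ => h (ext0 J u)) y := by
        refine lintegral_congr fun u => lintegral_congr fun y => ?_
        have e1 : glue J (ext0 J u) y ∈ C ↔ y ∈ B := by
          have : (fun i : {i : Fin k // i ∉ J} => glue J (ext0 J u) y i.1) = y := by
            funext i; simp [glue, i.2]
          simp only [hC, Set.mem_ofPred_eq, this]
        have e2 : h (glue J (ext0 J u) y) = h (ext0 J u) := by
          simp only [hh]
          refine lintegral_congr fun z => ?_
          rw [glue_congr J _ (x + ext0 J u) z]
          intro i hi
          simp [glue, hi]
        by_cases hy : y ∈ B
        · rw [Set.indicator_of_mem hy, Set.indicator_of_mem (e1.2 hy), e2]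
        · rw [Set.indicator_of_notMem hy, Set.indicator_of_notMem (fun h => hy (e1.1 h))]
    _ = ∫⁻ u : {i : Fin k // i ∈ J} → ℝ, h (ext0 J u) * volume B := by
        refine lintegral_congr fun u => ?_
        rw [lintegral_indicator Metric.isClosed_closedBall.measurableSet, setLIntegral_const]
    _ = (∫⁻ u : {i : Fin k // i ∈ J} → ℝ, h (ext0 J u)) * volume B :=
        lintegral_mul_const _ (hhm.comp (measurable_ext0 J))
    _ = (∫⁻ z, ENNReal.ofReal (f z)) * volume B := by
        congr 1
        rw [← lintegral_add_left_eq_self (μ := volume) (fun z => ENNReal.ofReal (f z)) x,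
          lintegral_split J (fun z => ENNReal.ofReal (f (x + z)))
            ((hfm.comp (measurable_const_add x)).ennreal_ofReal)]
        refine lintegral_congr fun u => ?_
        simp only [hh]
        rw [← lintegral_add_right_eq_self (μ := volume) _ (fun i : {i : Fin k // i ∉ J} => x i.1)]
        refine lintegral_congr fun y => ?_
        rw [add_comm x (glue _ _ _), glue_add, add_comm x]
    _ < ∞ := ENNReal.mul_lt_top hf.lt_top Metric.isBounded_closedBall.measure_lt_top

lemma key_integrable' {k : ℕ} (f : (Fin k → ℝ) → ℝ) (hfm : Measurable f) (hf0 : ∀ x, 0 ≤ f x)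
    (hf : ∫⁻ x, ENNReal.ofReal (f x) ≠ ∞)
    (P₀ : Set (Fin k → ℝ)) (hP₀b : Bornology.IsBounded P₀) (I J : Finset (Fin k))
    (x : Fin k → ℝ) :
    Integrable (fun p : (Fin k → ℝ) × ({i : Fin k // i ∉ J} → ℝ) =>
      if ∀ i : {i : Fin k // i ∉ J}, i.1 ∈ I → p.2 i ≤ (x + p.1) i.1 then
        f (glue J (x + p.1) p.2) else 0)
      ((volume.restrict P₀).prod volume) := by
  have hs : MeasurableSet {p : (Fin k → ℝ) × ({i : Fin k // i ∉ J} → ℝ) |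
      ∀ i : {i : Fin k // i ∉ J}, i.1 ∈ I → p.2 i ≤ (x + p.1) i.1} := by
    simp only [Set.ofPred_forall]
    refine MeasurableSet.iInter fun i => MeasurableSet.iInter fun _ => ?_
    refine measurableSet_le (by fun_prop) ?_
    simp only [Pi.add_apply]
    fun_prop
  refine ((key_integrable f hfm hf0 hf P₀ hP₀b J x).indicator hs).congr (ae_of_all _ fun p => ?_)
  simp only [Set.indicator, Set.mem_ofPred_eq]

lemma num_conv {k : ℕ} (f : (Fin k → ℝ) → ℝ) (hfm : Measurable f) (hf0 : ∀ x, 0 ≤ f x)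
    (hf : ∫⁻ x, ENNReal.ofReal (f x) ≠ ∞)
    (P₀ : Set (Fin k → ℝ)) (hP₀b : Bornology.IsBounded P₀) (I J : Finset (Fin k))
    (x : Fin k → ℝ) (c : ℝ) :
    condCDFNum (fun x => c * ∫ τ in P₀, f (x + τ)) I J x =
      c * ∫ τ in P₀, condCDFNum f I J (x + τ) := by
  have hi := key_integrable' f hfm hf0 hf P₀ hP₀b I J x
  set F : (Fin k → ℝ) × ({i : Fin k // i ∉ J} → ℝ) → ℝ := fun p =>
      if ∀ i : {i : Fin k // i ∉ J}, i.1 ∈ I → p.2 i ≤ (x + p.1) i.1 then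
        f (glue J (x + p.1) p.2) else 0 with hF
  have hmr : Measurable (fun (τ : Fin k → ℝ) (i : {i : Fin k // i ∉ J}) => τ i.1) :=
    measurable_pi_lambda _ fun i => measurable_pi_apply _
  have hsk : MeasurePreserving
      (fun p : (Fin k → ℝ) × ({i : Fin k // i ∉ J} → ℝ) => (id p.1, p.2 + fun i => p.1 i.1))
      ((volume.restrict P₀).prod volume) ((volume.restrict P₀).prod volume) := by
    refine (MeasurePreserving.id (volume.restrict P₀)).skew_product (μc := volume) (μd := volume)
      (g := fun (τ : Fin k → ℝ) (y : {i : Fin k // i ∉ J} → ℝ) => y + fun i => τ i.1) ?_ ?_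
    · exact measurable_snd.add (hmr.comp measurable_fst)
    · exact ae_of_all _ fun τ => (measurePreserving_add_right volume _).map_eq
  have hi2 := hsk.integrable_comp_of_integrable hi
  have e : ∀ (y : {i : Fin k // i ∉ J} → ℝ) (τ : Fin k → ℝ),
      F (τ, y + fun i => τ i.1) =
        if ∀ i : {i : Fin k // i ∉ J}, i.1 ∈ I → y i ≤ x i.1 then f (glue J x y + τ) else 0 := by
    intro y τ
    simp only [hF, glue_add, Pi.add_apply, add_le_add_iff_right]
  have e4 : ∀ τ : Fin k → ℝ, ∫ y : {i : Fin k // i ∉ J} → ℝ, F (τ, y) =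
      condCDFNum f I J (x + τ) := fun τ => rfl
  clear_value F
  have hi3 : Integrable (Function.uncurry fun (τ : Fin k → ℝ) (y : {i : Fin k // i ∉ J} → ℝ) =>
      F (τ, y + fun i => τ i.1)) ((volume.restrict P₀).prod volume) := hi2
  calc condCDFNum (fun x => c * ∫ τ in P₀, f (x + τ)) I J x
      = ∫ y : {i : Fin k // i ∉ J} → ℝ, c * ∫ τ in P₀, F (τ, y + fun i => τ i.1) := by
        simp only [condCDFNum, e]
        refine integral_congr_ae (ae_of_all _ fun y => ?_)
        dsimp only
        split_ifs <;> simp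
    _ = c * ∫ y : {i : Fin k // i ∉ J} → ℝ, ∫ τ in P₀, F (τ, y + fun i => τ i.1) :=
        integral_const_mul _ _
    _ = c * ∫ τ in P₀, ∫ y : {i : Fin k // i ∉ J} → ℝ, F (τ, y + fun i => τ i.1) := by
        congr 1
        exact Eq.symm (integral_integral_swap (μ := volume.restrict P₀) (ν := volume)
          (f := fun (τ : Fin k → ℝ) (y : {i : Fin k // i ∉ J} → ℝ) =>
          F (τ, y + fun i => τ i.1)) hi3)
    _ = c * ∫ τ in P₀, condCDFNum f I J (x + τ) := by
        have e3 : ∀ τ : Fin k → ℝ, ∫ y : {i : Fin k // i ∉ J} → ℝ, F (τ, y + fun i => τ i.1) =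
            condCDFNum f I J (x + τ) := fun τ => by
          rw [← e4 τ]
          exact integral_add_right_eq_self (μ := volume) (fun y => F (τ, y))
            (fun i : {i : Fin k // i ∉ J} => τ i.1)
        simp only [e3]

lemma margDen_eq {k : ℕ} (f : (Fin k → ℝ) → ℝ) (J : Finset (Fin k)) (x : Fin k → ℝ) :
    margDen f J x = condCDFNum f ∅ J x := by
  simp [margDen, condCDFNum]

lemma cond_mul {k : ℕ} (f : (Fin k → ℝ) → ℝ) (hfm : Measurable f) (hf0 : ∀ x, 0 ≤ f x)
    (hf : ∫⁻ x, ENNReal.ofReal (f x) ≠ ∞)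
    (P₀ : Set (Fin k → ℝ)) (hP₀b : Bornology.IsBounded P₀) (I J : Finset (Fin k))
    (x : Fin k → ℝ) :
    ∫ τ in P₀, condCDFd f I J (x + τ) * margDen f J (x + τ) =
      ∫ τ in P₀, condCDFNum f I J (x + τ) := by
  refine integral_congr_ae ?_
  filter_upwards [(key_integrable f hfm hf0 hf P₀ hP₀b J x).prod_right_ae] with τ hτ
  by_cases h : margDen f J (x + τ) = 0
  · rw [h, mul_zero]
    have h2 := (integral_eq_zero_iff_of_nonneg (fun _ => hf0 _) hτ).1 h
    refine (integral_eq_zero_of_ae ?_).symm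
    filter_upwards [h2] with y hy
    simp only [Pi.zero_apply] at hy ⊢
    split_ifs
    · exact hy
    · rfl
  · exact div_mul_cancel₀ _ h

lemma ofReal_marg {k : ℕ} (f : (Fin k → ℝ) → ℝ) (hfm : Measurable f) (hf0 : ∀ x, 0 ≤ f x)
    (hf : ∫⁻ x, ENNReal.ofReal (f x) ≠ ∞)
    (P₀ : Set (Fin k → ℝ)) (hP₀b : Bornology.IsBounded P₀) (J : Finset (Fin k))
    (x : Fin k → ℝ) :
    ENNReal.ofReal (∫ τ in P₀, margDen f J (x + τ)) =
      ∫⁻ τ in P₀, ∫⁻ y : {i : Fin k // i ∉ J} → ℝ, ENNReal.ofReal (f (glue J (x + τ) y)) := by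
  have hi := key_integrable f hfm hf0 hf P₀ hP₀b J x
  have h1 := integral_prod _ hi
  have h2 : ∫ τ in P₀, margDen f J (x + τ) = ∫ p, f (glue J (x + p.1) p.2)
      ∂((volume.restrict P₀).prod (volume : Measure ({i : Fin k // i ∉ J} → ℝ))) := h1.symm
  rw [h2, ofReal_integral_eq_lintegral_ofReal hi (ae_of_all _ fun _ => hf0 _),
    lintegral_prod _ hi.1.aemeasurable.ennreal_ofReal]

/-- conditional distribution of a dithered quantizer output.  Let `X` have density
`f` on `ℝ^k`, let `N` be uniform over `−P₀` and independent of `X`, and `X̂ = X + N`.  Then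
(i) the subvector `X̂_J` has density `x̂_J ↦ (1/V) ∫_{P₀} f_{X_J}(x̂_J + τ_J) dτ`, and (ii) the
conditional c.d.f. of `X̂_I` given `X̂_J` equals
`(∫_{P₀} F_{X_I|X_J}(x̂_I + τ_I | x̂_J + τ_J) f_{X_J}(x̂_J + τ_J) dτ) / (∫_{P₀} f_{X_J}(x̂_J + τ_J) dτ)`
whenever the denominator is nonzero. -/
theorem dithered_quantizer_conditional_distribution {Ω : Type*} [MeasurableSpace Ω]
    (P : Measure Ω) [IsProbabilityMeasure P] {k : ℕ} (X N : Ω → (Fin k → ℝ))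
    (hXm : Measurable X) (hNm : Measurable N)
    (f : (Fin k → ℝ) → ℝ) (hfm : Measurable f) (hf0 : ∀ x, 0 ≤ f x)
    (hX : P.map X = volume.withDensity (fun x => ENNReal.ofReal (f x)))
    (P₀ : Set (Fin k → ℝ)) (hP₀m : MeasurableSet P₀) (hP₀b : Bornology.IsBounded P₀)
    (hV : 0 < volume P₀)
    (hN : P.map N = (volume P₀)⁻¹ • volume.restrict (-P₀))
    (hindep : IndepFun X N P)
    (I J : Finset (Fin k)) (hIJ : Disjoint I J) :
    P.map (fun ω => fun j : {i : Fin k // i ∈ J} => (X ω + N ω) j.1) =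
        volume.withDensity (fun xJ : {i : Fin k // i ∈ J} → ℝ =>
          ENNReal.ofReal ((volume P₀).toReal⁻¹ *
            ∫ τ in P₀, margDen f J ((fun i => if h : i ∈ J then xJ ⟨i, h⟩ else 0) + τ))) ∧
      ∀ xh : Fin k → ℝ, (∫ τ in P₀, margDen f J (xh + τ)) ≠ 0 →
        condCDFd (fun x => (volume P₀).toReal⁻¹ * ∫ τ in P₀, f (x + τ)) I J xh =
          (∫ τ in P₀, condCDFd f I J (xh + τ) * margDen f J (xh + τ)) /
            (∫ τ in P₀, margDen f J (xh + τ)) := by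
  have hf : ∫⁻ x, ENNReal.ofReal (f x) ≠ ∞ := by
    have h1 : (P.map X) Set.univ = ∫⁻ x, ENNReal.ofReal (f x) := by
      rw [hX, withDensity_apply _ MeasurableSet.univ, Measure.restrict_univ]
    rw [← h1]
    have := Measure.isProbabilityMeasure_map (μ := P) hXm.aemeasurable
    exact measure_ne_top _ _
  have hVt : volume P₀ ≠ ∞ := hP₀b.measure_lt_top.ne
  have hV0 : (volume P₀).toReal⁻¹ ≠ 0 := inv_ne_zero (ENNReal.toReal_ne_zero.2 ⟨hV.ne', hVt⟩)
  refine ⟨?_, fun xh _ => ?_⟩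
  · set c := (volume P₀)⁻¹ with hc
    have hct : c ≠ ∞ := ENNReal.inv_ne_top.2 hV.ne'
    set r : (Fin k → ℝ) → ({i : Fin k // i ∈ J} → ℝ) := fun x j => x j.1 with hr
    have hrm : Measurable r := measurable_pi_lambda _ fun i => measurable_pi_apply _
    have hXN := (indepFun_iff_map_prod_eq_prod_map_map hXm.aemeasurable hNm.aemeasurable).1 hindep
    have hsum : Measurable fun p : (Fin k → ℝ) × (Fin k → ℝ) => r (p.1 + p.2) :=
      hrm.comp (measurable_fst.add measurable_snd)
    have hmap : P.map (fun ω => fun j : {i : Fin k // i ∈ J} => (X ω + N ω) j.1) =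
        ((P.map X).prod (P.map N)).map (fun p => r (p.1 + p.2)) := by
      rw [← hXN, Measure.map_map hsum (hXm.prodMk hNm)]
      rfl
    have hGm : Measurable fun x => ENNReal.ofReal (f x) := hfm.ennreal_ofReal
    have := Measure.isProbabilityMeasure_map (μ := P) hXm.aemeasurable
    have := Measure.isProbabilityMeasure_map (μ := P) hNm.aemeasurable
    rw [hmap]
    refine Measure.ext_of_lintegral _ fun φ hφ => ?_
    rw [lintegral_map hφ hsum, lintegral_prod_symm' (fun p : (Fin k → ℝ) × (Fin k → ℝ) => φ (r (p.1 + p.2))) (hφ.comp hsum)]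
    have hden : (fun xJ : {i : Fin k // i ∈ J} → ℝ =>
          ENNReal.ofReal ((volume P₀).toReal⁻¹ *
            ∫ τ in P₀, margDen f J ((fun i => if h : i ∈ J then xJ ⟨i, h⟩ else 0) + τ))) =
        fun u => c * ∫⁻ τ in P₀, ∫⁻ y : {i : Fin k // i ∉ J} → ℝ,
          ENNReal.ofReal (f (glue J (ext0 J u + τ) y)) := by
      funext u
      rw [ENNReal.ofReal_mul (by positivity), ← ENNReal.toReal_inv, ENNReal.ofReal_toReal hct]
      congr 1
      exact ofReal_marg f hfm hf0 hf P₀ hP₀b J (ext0 J u)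
    have hKm : Measurable fun q : (({i : Fin k // i ∈ J} → ℝ) × (Fin k → ℝ)) ×
        ({i : Fin k // i ∉ J} → ℝ) => ENNReal.ofReal (f (glue J (ext0 J q.1.1 + q.1.2) q.2)) := by
      refine hGm.comp ((measurable_glue J).comp (Measurable.prodMk ?_ measurable_snd))
      exact ((measurable_ext0 J).comp (measurable_fst.comp measurable_fst)).add
        (measurable_snd.comp measurable_fst)
    have hK2 : Measurable fun q : ({i : Fin k // i ∈ J} → ℝ) × (Fin k → ℝ) =>
        ∫⁻ y : {i : Fin k // i ∉ J} → ℝ, ENNReal.ofReal (f (glue J (ext0 J q.1 + q.2) y)) :=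
      hKm.lintegral_prod_right'
    have hK3 : Measurable fun u : {i : Fin k // i ∈ J} → ℝ => ∫⁻ τ in P₀,
        ∫⁻ y : {i : Fin k // i ∉ J} → ℝ, ENNReal.ofReal (f (glue J (ext0 J u + τ) y)) :=
      hK2.lintegral_prod_right'
    rw [hden, lintegral_withDensity_eq_lintegral_mul _ (hK3.const_mul c) hφ, hN,
      lintegral_smul_measure, smul_eq_mul]
    simp only [Pi.mul_apply, mul_assoc]
    rw [lintegral_const_mul (f := fun u : {i : Fin k // i ∈ J} → ℝ => (∫⁻ τ in P₀,
        ∫⁻ y : {i : Fin k // i ∉ J} → ℝ, ENNReal.ofReal (f (glue J (ext0 J u + τ) y))) * φ u)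
      c (hK3.mul hφ)]
    congr 1
    have hneg := (Measure.measurePreserving_neg (volume : Measure (Fin k → ℝ))).setLIntegral_comp_preimage_emb
      (MeasurableEquiv.neg (Fin k → ℝ)).measurableEmbedding
      (fun n => ∫⁻ x, φ (r (x + n)) ∂(P.map X)) (-P₀)
    have hpre : (Neg.neg ⁻¹' (-P₀) : Set (Fin k → ℝ)) = P₀ := by
      ext z; simp
    rw [hpre] at hneg
    rw [← hneg]
    have hin : ∀ τ : Fin k → ℝ, ∫⁻ x, φ (r (x + -τ)) ∂(P.map X) =
        ∫⁻ u : {i : Fin k // i ∈ J} → ℝ, (∫⁻ y : {i : Fin k // i ∉ J} → ℝ,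
          ENNReal.ofReal (f (glue J (ext0 J u + τ) y))) * φ u := by
      intro τ
      have hm1 : Measurable fun x => φ (r (x + -τ)) := hφ.comp (hrm.comp (measurable_add_const _))
      rw [hX, lintegral_withDensity_eq_lintegral_mul _ hGm hm1,
        ← lintegral_add_right_eq_self (μ := volume) _ τ]
      simp only [Pi.mul_apply, add_neg_cancel_right]
      rw [lintegral_split J (fun x => ENNReal.ofReal (f (x + τ)) * φ (r x))
        ((hGm.comp (measurable_add_const τ)).mul (hφ.comp hrm))]
      refine lintegral_congr fun u => ?_
      have hru : ∀ y, r (glue J (ext0 J u) y) = u := by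
        intro y
        funext j
        simp [hr, glue, ext0]
      simp only [hru, glue_add]
      have hmy : Measurable fun y : {i : Fin k // i ∉ J} → ℝ =>
          ENNReal.ofReal (f (glue J (ext0 J u + τ) y)) :=
        hGm.comp ((measurable_glue J).comp (measurable_const.prodMk measurable_id))
      rw [lintegral_add_right_eq_self (μ := volume) (fun y : {i : Fin k // i ∉ J} → ℝ =>
        ENNReal.ofReal (f (glue J (ext0 J u + τ) y)) * φ u) (fun i => τ i.1),
        lintegral_mul_const _ hmy]
    simp only [hin]
    rw [lintegral_lintegral_swap]
    · refine lintegral_congr fun u => ?_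
      exact lintegral_mul_const _ (hK2.comp (measurable_const.prodMk measurable_id))
    · exact ((hK2.comp measurable_swap).mul (hφ.comp measurable_snd)).aemeasurable
  · unfold condCDFd
    rw [margDen_eq, num_conv f hfm hf0 hf P₀ hP₀b I J, num_conv f hfm hf0 hf P₀ hP₀b ∅ J,
      mul_div_mul_left _ _ hV0]
    have h1 := cond_mul f hfm hf0 hf P₀ hP₀b I J xh
    unfold condCDFd at h1
    rw [h1]
    simp only [margDen_eq]
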